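/- Let g : ℝ^d → Y be a measurable function into a finite label set Y, let σ > 0, and define the randomized classifier M(X) as the distribution of g(X + z) with z ∼ N(0, σ²I_d). Let X ∈ ℝ^d, y₊ ∈ Y, and p₊, p₋ ∈ (0,1) satisfy P(M(X) = y₊) ≥ p₊ ≥ p₋ ≥ max_{y ≠ y₊} P(M(X) = y). Set r^∞_X = (σ/(2√d))(Φ⁻¹(p₊) − Φ⁻¹(p₋)). Then for every e ∈ ℝ^d with ‖e‖_∞ ≤ r^∞_X and every y ∈ Y, P(g(X + e + z) = y₊) ≥ P(g(X + e + z) = y). -/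

import Mathlib

open MeasureTheory ProbabilityTheory Real
open scoped NNReal ENNReal

/-- Standard normal CDF Φ. -/
noncomputable def Phi (x : ℝ) : ℝ := ((gaussianReal 0 1) (Set.Iic x)).toReal

/-- Inverse of the standard normal CDF, Φ⁻¹. -/
noncomputable def PhiInv (q : ℝ) : ℝ := Function.invFun Phi q

/-- The trade-off function of the Gaussian mechanism, `G_μ(α) = Φ(Φ⁻¹(1-α) − μ)`. -/
noncomputable def Gmu (μ α : ℝ) : ℝ := Phi (PhiInv (1 - α) - μ)

/-- Euclidean (L2) norm on `ℝ^n`. -/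
noncomputable def l2norm {n : ℕ} (x : Fin n → ℝ) : ℝ := Real.sqrt (∑ i, (x i) ^ 2)

/-- Maximum (L∞) norm on `ℝ^n`. -/
noncomputable def linftyNorm {n : ℕ} (x : Fin n → ℝ) : ℝ := ⨆ i, |x i|

/-- Lp norm on `ℝ^n`. -/
noncomputable def lpNorm {n : ℕ} (p : ℝ) (x : Fin n → ℝ) : ℝ := (∑ i, |x i| ^ p) ^ (1 / p)

/-- `T(P,Q) ≥ f`: every measurable `[0,1]`-valued test `φ` has type II error
`1 − ∫ φ dQ` at least `f` of its level `∫ φ dP`. -/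
def TradeoffGE {Ω : Type*} [MeasurableSpace Ω] (P Q : Measure Ω) (f : ℝ → ℝ) : Prop :=
  ∀ φ : Ω → ℝ, Measurable φ → (∀ ω, φ ω ∈ Set.Icc (0 : ℝ) 1) →
    1 - ∫ ω, φ ω ∂Q ≥ f (∫ ω, φ ω ∂P)

/-- The Gaussian measure `N(v, s·I_d)` on `ℝ^d` (spherical covariance `s ≥ 0`). -/
noncomputable def gaussPi (d : ℕ) (v : Fin d → ℝ) (s : ℝ≥0) : Measure (Fin d → ℝ) :=
  Measure.pi fun i => gaussianReal (v i) s

lemma Phi_eq_cdf (x : ℝ) : Phi x = cdf (gaussianReal 0 1) x := by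
  rw [cdf_eq_real]; rfl

lemma Phi_mono : Monotone Phi := by
  intro a b h
  simp only [Phi_eq_cdf]
  exact monotone_cdf _ h

lemma Phi_continuous : Continuous Phi := by
  have h : Phi = cdf (gaussianReal 0 1) := funext Phi_eq_cdf
  rw [h, continuous_iff_continuousAt]
  intro a
  have hm := monotone_cdf (gaussianReal 0 1)
  rw [hm.continuousAt_iff_leftLim_eq_rightLim, StieltjesFunction.rightLim_eq]
  have := nullSingletonClass_gaussianReal (μ := 0) (v := 1) one_ne_zero
  have h0 : (gaussianReal 0 1) {a} = 0 := measure_singleton a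
  rw [← measure_cdf (gaussianReal 0 1), StieltjesFunction.measure_singleton] at h0
  have h1 := ENNReal.ofReal_eq_zero.1 h0
  have h2 := hm.leftLim_le (le_refl a)
  linarith

lemma Phi_PhiInv {q : ℝ} (hq : q ∈ Set.Ioo (0 : ℝ) 1) : Phi (PhiInv q) = q := by
  apply Function.invFun_eq
  have h : Phi = cdf (gaussianReal 0 1) := funext Phi_eq_cdf
  have h0 := tendsto_cdf_atBot (gaussianReal 0 1)
  have h1 := tendsto_cdf_atTop (gaussianReal 0 1)
  rw [← h] at h0 h1
  obtain ⟨a, ha⟩ := (h0.eventually_lt_const hq.1).exists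
  obtain ⟨b, hb⟩ := (h1.eventually_const_lt hq.2).exists
  exact mem_range_of_exists_le_of_exists_ge Phi_continuous ⟨a, ha.le⟩ ⟨b, hb.le⟩

lemma Phi_neg (x : ℝ) : Phi (-x) = 1 - Phi x := by
  have := nullSingletonClass_gaussianReal (μ := 0) (v := 1) one_ne_zero
  have h : (gaussianReal 0 1) (Set.Iic (-x)) = (gaussianReal 0 1) (Set.Ioi x) := by
    conv_lhs => rw [← neg_zero, ← gaussianReal_map_neg,
      Measure.map_apply measurable_neg measurableSet_Iic]
    rw [measure_congr (Ioi_ae_eq_Ici (μ := gaussianReal 0 1) (a := x))]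
    congr 1
    ext y; simp
  have h2 := prob_compl_eq_one_sub (μ := gaussianReal 0 1) (measurableSet_Iic (a := x))
  rw [Set.compl_Iic] at h2
  rw [Phi, Phi, h, h2, ENNReal.toReal_sub_of_le prob_le_one (by simp)]
  simp

lemma np_core {Ω : Type*} [MeasurableSpace Ω] (P Q : Measure Ω) [IsFiniteMeasure P]
    (f : Ω → ℝ≥0∞) (hQ : Q = P.withDensity f) (k : ℝ≥0∞)
    (A H : Set Ω) (hA : MeasurableSet A) (hH : MeasurableSet H)
    (h1 : ∀ z ∈ H, f z ≤ k) (h2 : ∀ z, z ∉ H → k ≤ f z) (hP : P H ≤ P A) : Q H ≤ Q A := by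
  have e1 := measure_inter_add_sdiff (μ := P) H hA
  have e2 := measure_inter_add_sdiff (μ := P) A hH
  have e3 := measure_inter_add_sdiff (μ := Q) H hA
  have e4 := measure_inter_add_sdiff (μ := Q) A hH
  rw [Set.inter_comm] at e2 e4
  have h3 : P (H \ A) ≤ P (A \ H) := by
    rw [← e1, ← e2] at hP
    exact (ENNReal.add_le_add_iff_left (measure_ne_top _ _)).1 hP
  have h4 : Q (H \ A) ≤ k * P (H \ A) := by
    rw [hQ, withDensity_apply _ (hH.diff hA), ← setLIntegral_const]
    exact setLIntegral_mono measurable_const fun z hz => h1 z hz.1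
  have h5 : k * P (A \ H) ≤ Q (A \ H) := by
    rw [hQ, withDensity_apply _ (hA.diff hH), ← setLIntegral_const]
    exact setLIntegral_mono' (hA.diff hH) fun z hz => h2 z hz.2
  rw [← e3, ← e4]
  refine add_le_add le_rfl ?_
  exact h4.trans ((by gcongr : _ ≤ k * P (A \ H)).trans h5)

/-- One-dimensional likelihood ratio. -/
lemma gaussianReal_shift (e : ℝ) (v : ℝ≥0) (hv : v ≠ 0) :
    gaussianReal e v = (gaussianReal 0 v).withDensity
      (fun x => ENNReal.ofReal (rexp ((e * x - e ^ 2 / 2) / v))) := by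
  rw [gaussianReal_of_var_ne_zero _ hv, gaussianReal_of_var_ne_zero _ hv,
    ← withDensity_mul _ (measurable_gaussianPDF _ _) (by fun_prop)]
  congr 1
  ext x
  simp only [gaussianPDF, Pi.mul_apply]
  rw [← ENNReal.ofReal_mul (gaussianPDFReal_nonneg _ _ _)]
  congr 1
  have hv' : (v : ℝ) ≠ 0 := by exact_mod_cast hv
  simp only [gaussianPDFReal]
  rw [mul_assoc _ (rexp _), ← Real.exp_add]
  congr 2
  field_simp
  ring

lemma gaussPi_density (d : ℕ) (e : Fin d → ℝ) (v : ℝ≥0) (hv : v ≠ 0) :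
    gaussPi d e v = (gaussPi d 0 v).withDensity
      (fun z => ∏ i, ENNReal.ofReal (rexp ((e i * z i - e i ^ 2 / 2) / v))) := by
  apply Measure.pi_eq
  intro s hs
  rw [withDensity_apply _ (MeasurableSet.univ_pi hs), ← lintegral_indicator (MeasurableSet.univ_pi hs)]
  let F : Fin d → ℝ → ℝ≥0∞ := fun i =>
    (s i).indicator (fun x => ENNReal.ofReal (rexp ((e i * x - e i ^ 2 / 2) / v)))
  have hF : ∀ i, Measurable (F i) := fun i => Measurable.indicator (by fun_prop) (hs i)
  have h1 : ∀ z : Fin d → ℝ, (Set.univ.pi s).indicator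
      (fun z => ∏ i, ENNReal.ofReal (rexp ((e i * z i - e i ^ 2 / 2) / v))) z = ∏ i, F i (z i) := by
    intro z
    by_cases hz : z ∈ Set.univ.pi s
    · rw [Set.indicator_of_mem hz]
      refine Finset.prod_congr rfl fun i _ => ?_
      simp only [F]
      rw [Set.indicator_of_mem (hz i trivial)]
    · rw [Set.indicator_of_notMem hz]
      simp only [Set.mem_univ_pi, not_forall] at hz
      obtain ⟨i, hi⟩ := hz
      symm
      apply Finset.prod_eq_zero (Finset.mem_univ i)
      simp only [F]
      rw [Set.indicator_of_notMem hi]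
  simp_rw [h1]
  have h2 := lintegral_prod_eq_prod_lintegral_of_indepFun (μ := gaussPi d 0 v) Finset.univ
    (fun i (z : Fin d → ℝ) => F i (z i)) (iIndepFun_pi fun i => (hF i).aemeasurable)
    (fun i => (hF i).comp (measurable_pi_apply i))
  rw [h2]
  refine Finset.prod_congr rfl fun i _ => ?_
  have h3 := (measurePreserving_eval (fun i : Fin d => gaussianReal ((0 : Fin d → ℝ) i) v) i).lintegral_comp (hF i)
  refine h3.trans ?_
  rw [gaussianReal_shift (e i) v hv, withDensity_apply _ (hs i), ← lintegral_indicator (hs i)]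
  rfl

lemma gaussPi_map (d : ℕ) (e : Fin d → ℝ) (v : ℝ≥0) :
    (gaussPi d 0 v).map (fun z => e + z) = gaussPi d e v := by
  have h := Measure.pi_map_pi (μ := fun i : Fin d => gaussianReal ((0 : Fin d → ℝ) i) v)
    (f := fun i x => e i + x) (fun i => by fun_prop)
  have h2 : (fun i => (gaussianReal ((0 : Fin d → ℝ) i) v).map (fun x => e i + x)) =
      fun i => gaussianReal (e i) v := by
    ext1 i
    rw [gaussianReal_map_const_add]; simp
  rw [h2] at h
  exact h

lemma gaussPi_inner (d : ℕ) (e : Fin d → ℝ) (v : ℝ≥0) :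
    (gaussPi d 0 v).map (fun z => ∑ i, e i * z i) =
      gaussianReal 0 ((l2norm e ^ 2).toNNReal * v) := by
  have hm : Measurable (fun z : Fin d → ℝ => ∑ i, e i * z i) := by fun_prop
  have : IsProbabilityMeasure (gaussPi d 0 v) := by unfold gaussPi; infer_instance
  have := Measure.isProbabilityMeasure_map (μ := gaussPi d 0 v) hm.aemeasurable
  apply Measure.ext_of_charFun
  ext t
  rw [charFun_apply_real, charFun_gaussianReal, integral_map hm.aemeasurable (by fun_prop)]
  have h1 : ∀ z : Fin d → ℝ, Complex.exp (t * (∑ i, e i * z i : ℝ) * Complex.I) =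
      ∏ i, Complex.exp ((t * e i : ℝ) * z i * Complex.I) := by
    intro z
    rw [← Complex.exp_sum]
    congr 1
    push_cast
    rw [Finset.mul_sum, Finset.sum_mul]
    refine Finset.sum_congr rfl fun i _ => ?_
    ring
  simp_rw [h1]
  have h2 := integral_fintype_prod_eq_prod (μ := fun i : Fin d => gaussianReal ((0 : Fin d → ℝ) i) v)
    (fun i (x : ℝ) => Complex.exp ((t * e i : ℝ) * x * Complex.I))
  refine h2.trans ?_
  simp_rw [← charFun_apply_real, charFun_gaussianReal]
  rw [← Complex.exp_sum]
  congr 1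
  have h3 : (0 : ℝ) ≤ ∑ i, e i ^ 2 := Finset.sum_nonneg fun i _ => sq_nonneg _
  have h4 : (((l2norm e ^ 2).toNNReal : ℝ≥0) : ℝ) = ∑ i, e i ^ 2 := by
    rw [l2norm, Real.sq_sqrt h3, Real.coe_toNNReal _ h3]
  push_cast
  rw [h4]
  push_cast
  simp only [Pi.zero_apply, Complex.ofReal_zero, mul_zero, zero_mul, zero_sub, Finset.sum_mul,
    Finset.sum_div, ← Finset.sum_neg_distrib]
  refine Finset.sum_congr rfl fun i _ => ?_
  ring

lemma gaussPi_halfspace (d : ℕ) (e : Fin d → ℝ) (σ : ℝ) (hσ : 0 < σ) (he : 0 < l2norm e) (a : ℝ) :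
    (gaussPi d 0 (σ ^ 2).toNNReal) {z | ∑ i, e i * z i ≤ (σ * l2norm e) * a} =
      gaussianReal 0 1 (Set.Iic a) := by
  have hc : 0 < σ * l2norm e := by positivity
  have hm : Measurable (fun z : Fin d → ℝ => ∑ i, e i * z i) := by fun_prop
  have h1 := gaussianReal_map_const_mul (μ := 0) (v := 1) (σ * l2norm e)
  have h2 := gaussPi_inner d e (σ ^ 2).toNNReal
  have h3 : (l2norm e ^ 2).toNNReal * (σ ^ 2).toNNReal =
      (.mk ((σ * l2norm e) ^ 2) (sq_nonneg _) * 1 : ℝ≥0) := by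
    rw [← Real.toNNReal_mul (sq_nonneg _)]
    ext
    rw [Real.coe_toNNReal _ (by positivity)]
    simp
    ring
  rw [h3] at h2
  rw [mul_zero, ← h2] at h1
  have h4 : {z : Fin d → ℝ | ∑ i, e i * z i ≤ (σ * l2norm e) * a} =
    (fun z : Fin d → ℝ => ∑ i, e i * z i) ⁻¹' (Set.Iic ((σ * l2norm e) * a)) := rfl
  rw [h4, ← Measure.map_apply hm measurableSet_Iic, ← h1,
    Measure.map_apply (by fun_prop) measurableSet_Iic]
  congr 1
  ext x
  exact mul_le_mul_iff_right₀ hc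

lemma sum_sq_eq {d : ℕ} (e : Fin d → ℝ) : ∑ i, e i ^ 2 = l2norm e ^ 2 := by
  rw [l2norm, Real.sq_sqrt (Finset.sum_nonneg fun i _ => sq_nonneg _)]

lemma key (d : ℕ) (e : Fin d → ℝ) (σ : ℝ) (hσ : 0 < σ) (he : 0 < l2norm e) (a : ℝ)
    (A : Set (Fin d → ℝ)) (hA : MeasurableSet A)
    (h : Phi a ≤ ((gaussPi d 0 (σ ^ 2).toNNReal) A).toReal) :
    Phi (a - l2norm e / σ) ≤ ((gaussPi d e (σ ^ 2).toNNReal) A).toReal := by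
  have : ∀ w v, IsProbabilityMeasure (gaussPi d w v) := fun w v => by
    unfold gaussPi; infer_instance
  have hv : (σ ^ 2).toNNReal ≠ 0 := by
    simp [hσ.ne']
  have hv' : (0 : ℝ) < (σ ^ 2).toNNReal := by
    rw [Real.coe_toNNReal _ (by positivity)]; positivity
  have hm : Measurable (fun z : Fin d → ℝ => ∑ i, e i * z i) := by fun_prop
  set H : Set (Fin d → ℝ) := {z | ∑ i, e i * z i ≤ (σ * l2norm e) * a} with hHdef
  have hH : MeasurableSet H := hm measurableSet_Iic
  have hPH := gaussPi_halfspace d e σ hσ he a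
  have hQH : gaussPi d e (σ ^ 2).toNNReal H = gaussianReal 0 1 (Set.Iic (a - l2norm e / σ)) := by
    rw [← gaussPi_map, Measure.map_apply (by fun_prop) hH, ← gaussPi_halfspace d e σ hσ he]
    congr 1
    ext z
    have : ∑ i, e i * (e i + z i) = l2norm e ^ 2 + ∑ i, e i * z i := by
      rw [← sum_sq_eq, ← Finset.sum_add_distrib]
      exact Finset.sum_congr rfl fun i _ => by ring
    have h2 : σ * l2norm e * (a - l2norm e / σ) = σ * l2norm e * a - l2norm e ^ 2 := by
      field_simp
    simp only [hHdef, Set.mem_preimage, Set.mem_ofPred_eq, Pi.add_apply, this, h2]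
    constructor <;> intro h <;> linarith
  have hprod : ∀ z : Fin d → ℝ,
      ∏ i, ENNReal.ofReal (rexp ((e i * z i - e i ^ 2 / 2) / (σ ^ 2).toNNReal)) =
      ENNReal.ofReal (rexp (((∑ i, e i * z i) - l2norm e ^ 2 / 2) / (σ ^ 2).toNNReal)) := by
    intro z
    rw [← ENNReal.ofReal_prod_of_nonneg (fun _ _ => (Real.exp_pos _).le), ← Real.exp_sum,
      ← Finset.sum_div, Finset.sum_sub_distrib, ← Finset.sum_div, sum_sq_eq]
  have hle := np_core (gaussPi d 0 (σ ^ 2).toNNReal) (gaussPi d e (σ ^ 2).toNNReal) _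
    (gaussPi_density d e _ hv)
    (ENNReal.ofReal (rexp ((σ * l2norm e * a - l2norm e ^ 2 / 2) / (σ ^ 2).toNNReal))) A H hA hH
    (fun z hz => by
      rw [hprod]
      have hz' : ∑ i, e i * z i ≤ (σ * l2norm e) * a := hz
      gcongr)
    (fun z hz => by
      rw [hprod]
      have hz' : (σ * l2norm e) * a ≤ ∑ i, e i * z i := (not_le.1 hz).le
      gcongr)
    (by
      rw [hPH]
      exact (ENNReal.toReal_le_toReal (measure_ne_top _ _) (measure_ne_top _ _)).1 h)
  rw [hQH] at hle
  exact ENNReal.toReal_mono (measure_ne_top _ _) hle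

lemma l2_le {d : ℕ} (e : Fin d → ℝ) : l2norm e ≤ Real.sqrt d * linftyNorm e := by
  have h0 : 0 ≤ linftyNorm e := Real.iSup_nonneg fun i => abs_nonneg _
  have h1 : ∀ i, |e i| ≤ linftyNorm e := fun i =>
    le_ciSup (f := fun i => |e i|) (Set.finite_range _).bddAbove i
  rw [l2norm]
  apply Real.sqrt_le_iff.2
  refine ⟨by positivity, ?_⟩
  rw [mul_pow, Real.sq_sqrt (by positivity)]
  calc ∑ i, e i ^ 2 ≤ ∑ i : Fin d, linftyNorm e ^ 2 :=
        Finset.sum_le_sum fun i _ => by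
          rw [← sq_abs]; exact pow_le_pow_left₀ (abs_nonneg _) (h1 i) 2
    _ = _ := by simp

/-- **Randomized smoothing certificate (L∞ via the `√d` bound).**
For a measurable base classifier `g : ℝ^d → Y` smoothed with Gaussian noise `N(0, σ²I_d)`,
if `P(g(X+z) = y₊) ≥ p₊ ≥ p₋ ≥ max_{y ≠ y₊} P(g(X+z) = y)` then for every perturbation `e`
with `‖e‖_∞ ≤ (σ/(2√d))(Φ⁻¹(p₊) − Φ⁻¹(p₋))`, `y₊` remains a most probable class of the
smoothed classifier at `X + e`. -/
theorem rs_certificate_linfty {d : ℕ} {Y : Type*} [Fintype Y] [MeasurableSpace Y]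
    [MeasurableSingletonClass Y]
    (g : (Fin d → ℝ) → Y) (hg : Measurable g) (σ : ℝ) (hσ : 0 < σ)
    (X : Fin d → ℝ) (yPlus : Y) (pPlus pMinus : ℝ)
    (hpPlus : pPlus ∈ Set.Ioo (0 : ℝ) 1) (hpMinus : pMinus ∈ Set.Ioo (0 : ℝ) 1)
    (hplus : ((gaussPi d 0 (σ ^ 2).toNNReal) {z | g (X + z) = yPlus}).toReal ≥ pPlus)
    (horder : pPlus ≥ pMinus)
    (hminus : ∀ y : Y, y ≠ yPlus →
      ((gaussPi d 0 (σ ^ 2).toNNReal) {z | g (X + z) = y}).toReal ≤ pMinus) :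
    ∀ e : Fin d → ℝ,
      linftyNorm e ≤ σ / (2 * Real.sqrt d) * (PhiInv pPlus - PhiInv pMinus) → ∀ y : Y,
      ((gaussPi d 0 (σ ^ 2).toNNReal) {z | g (X + e + z) = yPlus}).toReal ≥
        ((gaussPi d 0 (σ ^ 2).toNNReal) {z | g (X + e + z) = y}).toReal := by
  intro e he y
  by_cases hy : y = yPlus
  · rw [hy]
  have : ∀ w v, IsProbabilityMeasure (gaussPi d w v) := fun w v => by
    unfold gaussPi; infer_instance
  have hmA : ∀ y, MeasurableSet {z | g (X + z) = y} := fun y =>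
    (hg.comp (measurable_const_add X)) (measurableSet_singleton y)
  have hshift : ∀ y, (gaussPi d 0 (σ ^ 2).toNNReal) {z | g (X + e + z) = y} =
      (gaussPi d e (σ ^ 2).toNNReal) {z | g (X + z) = y} := by
    intro y
    rw [← gaussPi_map d e, Measure.map_apply (by fun_prop) (hmA y)]
    simp only [Set.preimage_setOf_eq, add_assoc]
  rw [hshift, hshift]
  have hn : 0 ≤ l2norm e := Real.sqrt_nonneg _
  rcases hn.eq_or_lt with h0 | h0
  · have hs : ∑ i, e i ^ 2 = 0 := by rw [sum_sq_eq, ← h0]; simp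
    have he0 : e = 0 := by
      ext i
      have := (Finset.sum_eq_zero_iff_of_nonneg (fun i _ => sq_nonneg (e i))).1 hs i
        (Finset.mem_univ i)
      simpa using this
    rw [he0]
    exact ((hminus y hy).trans horder).trans hplus
  have hd : 0 < Real.sqrt d := by
    rw [Real.sqrt_pos]
    rcases Nat.eq_zero_or_pos d with hd | hd
    · subst hd; simp [l2norm] at h0
    · exact_mod_cast hd
  have hr : 2 * (l2norm e / σ) ≤ PhiInv pPlus - PhiInv pMinus := by
    have h1 := l2_le e
    have h2 : Real.sqrt d * linftyNorm e ≤ σ / 2 * (PhiInv pPlus - PhiInv pMinus) := by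
      calc Real.sqrt d * linftyNorm e
          ≤ Real.sqrt d * (σ / (2 * Real.sqrt d) * (PhiInv pPlus - PhiInv pMinus)) := by gcongr
        _ = _ := by field_simp
    have h3 := h1.trans h2
    have h4 : l2norm e = σ * (l2norm e / σ) := by field_simp
    rw [h4] at h3
    have h5 : σ * (2 * (l2norm e / σ)) ≤ σ * (PhiInv pPlus - PhiInv pMinus) := by linarith
    exact le_of_mul_le_mul_left h5 hσ
  have k1 := key d e σ hσ h0 (PhiInv pPlus) _ (hmA yPlus) (by rw [Phi_PhiInv hpPlus]; exact hplus)
  have hc : ∀ w, ((gaussPi d w (σ ^ 2).toNNReal) {z | g (X + z) = y}ᶜ).toReal =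
      1 - ((gaussPi d w (σ ^ 2).toNNReal) {z | g (X + z) = y}).toReal := by
    intro w
    rw [prob_compl_eq_one_sub (hmA y), ENNReal.toReal_sub_of_le prob_le_one (by simp)]
    simp
  have k2 := key d e σ hσ h0 (-PhiInv pMinus) _ (hmA y).compl (by
    rw [Phi_neg, Phi_PhiInv hpMinus, hc]
    have := hminus y hy
    linarith)
  rw [hc, show -PhiInv pMinus - l2norm e / σ = -(PhiInv pMinus + l2norm e / σ) by ring,
    Phi_neg] at k2
  have k3 : Phi (PhiInv pMinus + l2norm e / σ) ≤ Phi (PhiInv pPlus - l2norm e / σ) :=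
    Phi_mono (by linarith)
  linarith
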